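/- Let 𝕜 be an algebraically closed field of characteristic zero, let D be a division ring which is a 𝕜-algebra (the image of 𝕜 is central in D), and let a finite group G act faithfully on D by 𝕜-algebra automorphisms. Set Q = D^G. Then for every finite-dimensional irreducible 𝕜-linear representation V of G, the space Hom_G(V, D) of G-equivariant 𝕜-linear maps V → D, regarded as a left vector space over Q via (q·f)(v) = q·f(v), satisfies dim_Q Hom_G(V, D) = dim_𝕜 V. -/

import Mathlib

/-!
The space `W = Hom(V, D)` of all `𝕜`-linear maps is a left `D`-vector space of dimension `dim V`,
with a semilinear action of `G` whose fixed points form `Hom_G(V, D)`. It suffices to prove Galois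
descent: a `Q`-basis of `W^G` is a `D`-basis of `W`. Both independence
(`linearIndependent_of_homG`) and spanning (`span_homG_eq_top`) follow by averaging over `G` from
the independence of the automorphisms (`automorphisms_independent`): if `∑ g, g(x) a_g = 0` for all
`x ∈ D`, then `a = 0`.

Independence can fail over general fields when `G` contains inner automorphisms, and here it rests
on `𝕜` being algebraically closed. The usual shortening argument reduces it to showing that
elements `b_g` inducing distinct inner automorphisms `g` are independent over the center `Z`. The
span `B` of all such elements is a finite-dimensional `Z`-algebra. If `g ≠ 1` is conjugation by
`b_g`, then, having finite order, it has an eigenvector `c ∈ D` with eigenvalue `ζ ∈ 𝕜`, `ζ ≠ 1`, so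
`c⁻¹ b_g c = ζ b_g`. Hence the field automorphism `b_g ↦ ζ b_g` of `Z[b_g]` exists, and the trace of
left multiplication by `b_g` on the `Z[b_g]`-vector space `B` equals `ζ` times itself, so it is
zero. As `1` has trace `dim B ≠ 0`, no linear relation among the `b_g` involves `1`.
-/

/-- The fixed subring `D^G` of an action `ρ` of a group `G` on a division ring `D`
by `𝕜`-algebra automorphisms. -/
def fixedSubring {𝕜 D G : Type*} [Field 𝕜] [DivisionRing D] [Algebra 𝕜 D] [Group G]
    (ρ : G →* (D ≃ₐ[𝕜] D)) : Subring D where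
  carrier := {x | ∀ g : G, ρ g x = x}
  mul_mem' := fun hx hy g => by rw [map_mul, hx g, hy g]
  one_mem' := fun g => map_one (ρ g)
  add_mem' := fun hx hy g => by rw [map_add, hx g, hy g]
  zero_mem' := fun g => map_zero (ρ g)
  neg_mem' := fun hx g => by rw [map_neg, hx g]

/-- `Hom_G(V, D)`, the space of `G`-equivariant `𝕜`-linear maps `V → D`, as a left
vector space over `Q = D^G` via `(q • f)(v) = q * f(v)`. -/
def homG {𝕜 D G V : Type*} [Field 𝕜] [DivisionRing D] [Algebra 𝕜 D] [Group G]
    [AddCommGroup V] [Module 𝕜 V]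
    (ρ : G →* (D ≃ₐ[𝕜] D)) (σ : Representation 𝕜 G V) :
    Submodule (fixedSubring ρ) (V →ₗ[𝕜] D) where
  carrier := {f | ∀ (g : G) (v : V), f (σ g v) = ρ g (f v)}
  add_mem' := fun hf hf' g v => by
    rw [LinearMap.add_apply, LinearMap.add_apply, hf g v, hf' g v, map_add]
  zero_mem' := fun g v => by rw [LinearMap.zero_apply, LinearMap.zero_apply, map_zero]
  smul_mem' := by
    intro q f hf g v
    rw [LinearMap.smul_apply, LinearMap.smul_apply, hf g v]
    change (q : D) * ρ g (f v) = ρ g ((q : D) * f v)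
    rw [map_mul, q.2 g]

/-! ### Traces of elements conjugate to a multiple of themselves -/

/-- An operator of finite order other than the identity has an eigenvector with eigenvalue
`ζ ≠ 1`; the space may be infinite-dimensional. Indeed `1 + X + ⋯ + X ^ (n - 1)` splits, does not
vanish at `1`, and kills every vector `f x - x`. -/
theorem exists_eigenvector_ne_one {𝕜 M : Type*} [Field 𝕜] [IsAlgClosed 𝕜] [CharZero 𝕜]
    [AddCommGroup M] [Module 𝕜 M] (f : Module.End 𝕜 M) {n : ℕ} (hn : n ≠ 0)
    (hfn : f ^ n = 1) (hf : f ≠ 1) :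
    ∃ ζ : 𝕜, ζ ≠ 1 ∧ ∃ c : M, c ≠ 0 ∧ f c = ζ • c := by
  -- A product of factors `f - a` kills a nonzero vector only if some factor does.
  have key : ∀ (s : Multiset 𝕜) (y : M), y ≠ 0 →
      Polynomial.aeval f (s.map fun a => Polynomial.X - Polynomial.C a).prod y = 0 →
      ∃ a ∈ s, ∃ c : M, c ≠ 0 ∧ f c = a • c := by
    intro s
    induction s using Multiset.induction_on with
    | empty => intro y hy h; simp at h; exact absurd h hy
    | cons a s ih =>
      intro y hy h
      by_cases h0 : f y - a • y = 0
      · exact ⟨a, by simp, y, hy, sub_eq_zero.mp h0⟩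
      · have h1 : Polynomial.aeval f (s.map fun a => Polynomial.X - Polynomial.C a).prod
            (f y - a • y) = 0 := by
          rw [← h, Multiset.map_cons, Multiset.prod_cons, mul_comm, map_mul, Module.End.mul_apply]
          simp [Module.algebraMap_end_apply]
        obtain ⟨a', ha', hc⟩ := ih _ h0 h1
        exact ⟨a', Multiset.mem_cons_of_mem ha', hc⟩
  obtain ⟨x, hx⟩ : ∃ x, f x - x ≠ 0 := by
    by_contra! h
    exact hf (LinearMap.ext fun x => sub_eq_zero.mp (h x))
  let p : Polynomial 𝕜 := ∑ i ∈ Finset.range n, Polynomial.X ^ i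
  have hp : p.Monic := Polynomial.monic_geom_sum_X hn
  have hpx : Polynomial.aeval f p (f x - x) = 0 := by
    have h1 : Polynomial.aeval f (p * (Polynomial.X - 1)) = 0 := by
      rw [geom_sum_mul]; simp [hfn]
    have h2 := LinearMap.congr_fun h1 x
    rw [map_mul, Module.End.mul_apply] at h2
    simpa using h2
  rw [(IsAlgClosed.splits p).eq_prod_roots_of_monic hp] at hpx
  obtain ⟨ζ, hζ, hc⟩ := key _ _ hx hpx
  refine ⟨ζ, ?_, hc⟩
  rintro rfl
  have h3 := Polynomial.isRoot_of_mem_roots hζ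
  simp [p, Polynomial.IsRoot, Polynomial.eval_finsetSum, hn] at h3

/-- If an automorphism `τ` of `E` scales `b` by `ζ ≠ 1`, then multiplication by `b` on a free
`E`-module has trace zero over `Z`: applying `τ` to coordinates conjugates it into `ζ` times
itself. -/
theorem trace_smul_eq_zero {Z E M : Type*} [Field Z] [Ring E] [Algebra Z E]
    [AddCommGroup M] [Module Z M] [Module E M] [IsScalarTower Z E M] [Module.Free E M]
    (τ : E ≃ₐ[Z] E) (b : E) (ζ : Z) (hζ : ζ ≠ 1) (hτ : τ b = ζ • b)
    (L : Module.End Z M) (hL : ∀ x, L x = b • x) : LinearMap.trace Z M L = 0 := by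
  let v := Module.Free.chooseBasis E M
  let e : M ≃ₗ[Z] (Module.Free.ChooseBasisIndex E M →₀ E) := v.repr.restrictScalars Z
  let T : M ≃ₗ[Z] M :=
    e.trans ((Finsupp.mapRange.linearEquiv τ.toLinearEquiv).trans e.symm)
  have hT : ∀ x, T (b • x) = ζ • (b • T x) := by
    intro x
    apply e.injective
    have he : ∀ y, e (b • y) = b • e y := fun y => v.repr.map_smul b y
    rw [LinearEquiv.map_smul e ζ, he]
    ext i
    simp [T, he, hτ]
  have h := LinearMap.trace_conj' L T
  have hconj : T.conj L = ζ • L := by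
    ext x
    simp [LinearEquiv.conj_apply, hL, hT]
  rw [hconj, map_smul, smul_eq_mul] at h
  have : (ζ - 1) * LinearMap.trace Z M L = 0 := by rw [sub_mul, h, one_mul, sub_self]
  exact (mul_eq_zero.mp this).resolve_left (sub_ne_zero.mpr hζ)

/-- If `c⁻¹ b c = ζ b` with `ζ ≠ 1`, left multiplication by `b` on a finite-dimensional subalgebra
`B ∋ b` has trace zero. The element `c` need not lie in `B`: conjugation by `c` is only used on
the division subalgebra `Z[b]`, over which `B` is free. -/
theorem trace_eq_zero_of_conj {Z D B : Type*} [Field Z] [DivisionRing D] [Algebra Z D]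
    [Ring B] [IsDomain B] [Algebra Z B] [FiniteDimensional Z B] (j : B →ₐ[Z] D)
    (hj : Function.Injective j) (b : B) (c : D) (hc : c ≠ 0) (ζ : Z) (hζ : ζ ≠ 1) (h : j b * c = ζ • (c * j b)) :
    LinearMap.trace Z B (Algebra.lmul Z B b) = 0 := by
  let E := Algebra.adjoin Z {b}
  have hfree : Module.Free E B := by
    let _ : DivisionRing E := divisionRingOfFiniteDimensional Z E
    exact Module.Free.of_divisionRing E B
  have htower : IsScalarTower Z E B := ⟨fun z e x => smul_mul_assoc z (e : B) x⟩
  let φ : E →ₐ[Z] D := j.comp E.val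
  have hφ : Function.Injective φ := hj.comp Subtype.val_injective
  have hex : ∀ x : E, ∃ y : E, φ y = c⁻¹ * φ x * c := by
    rintro ⟨x, hx⟩
    induction hx using Algebra.adjoin_induction with
    | mem x hx =>
      rw [Set.mem_singleton_iff] at hx
      subst hx
      refine ⟨ζ • ⟨x, Algebra.subset_adjoin rfl⟩, ?_⟩
      rw [map_smul]
      change ζ • j x = c⁻¹ * j x * c
      rw [mul_assoc, h, mul_smul_comm, inv_mul_cancel_left₀ hc]
    | algebraMap z =>
      refine ⟨algebraMap Z E z, ?_⟩
      change φ (algebraMap Z E z) = c⁻¹ * φ (algebraMap Z E z) * c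
      rw [AlgHom.commutes, mul_assoc, Algebra.commutes, inv_mul_cancel_left₀ hc]
    | add x y hx hy hx' hy' =>
      obtain ⟨u, hu⟩ := hx'
      obtain ⟨w, hw⟩ := hy'
      refine ⟨u + w, ?_⟩
      rw [map_add, hu, hw, ← add_mul, ← mul_add, ← map_add]
      rfl
    | mul x y hx hy hx' hy' =>
      obtain ⟨u, hu⟩ := hx'
      obtain ⟨w, hw⟩ := hy'
      refine ⟨u * w, ?_⟩
      have hxy : φ ⟨x * y, mul_mem hx hy⟩ = φ ⟨x, hx⟩ * φ ⟨y, hy⟩ := map_mul j x y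
      rw [map_mul, hu, hw, hxy]
      simp only [mul_assoc, mul_inv_cancel_left₀ hc]
  choose τ hτ using hex
  let τ' : E →ₐ[Z] E :=
    { toFun := τ
      map_one' := hφ (by rw [hτ, map_one, mul_one, inv_mul_cancel₀ hc])
      map_mul' := fun x y => hφ (by
        rw [map_mul, hτ, hτ, hτ, map_mul]
        simp only [mul_assoc, mul_inv_cancel_left₀ hc])
      map_zero' := hφ (by rw [hτ, map_zero, mul_zero, zero_mul])
      map_add' := fun x y => hφ (by
        rw [map_add, hτ, hτ, hτ, map_add, mul_add, add_mul])
      commutes' := fun z => hφ (by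
        rw [hτ, AlgHom.commutes, mul_assoc, Algebra.commutes, inv_mul_cancel_left₀ hc]) }
  have hinj : Function.Injective τ' := by
    intro x y hxy
    have h1 : c⁻¹ * φ x * c = c⁻¹ * φ y * c := by
      rw [← hτ, ← hτ]; exact congrArg φ hxy
    exact hφ (mul_left_cancel₀ (inv_ne_zero hc) (mul_right_cancel₀ hc h1))
  have hsurj : Function.Surjective τ' :=
    (LinearMap.injective_iff_surjective (f := τ'.toLinearMap)).mp hinj
  refine trace_smul_eq_zero (E := E) (AlgEquiv.ofBijective τ' ⟨hinj, hsurj⟩)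
    ⟨b, Algebra.subset_adjoin rfl⟩ ζ hζ ?_ _ fun x => rfl
  apply hφ
  rw [map_smul]
  change φ (τ _) = ζ • j b
  rw [hτ, mul_assoc]
  change c⁻¹ * (j b * c) = _
  rw [h, mul_smul_comm, inv_mul_cancel_left₀ hc]

/-! ### Independence of automorphisms -/

/-- The space of `d ∈ D` with `g(y) d = d y` for all `y`, over the center of `D`. Its nonzero
elements are exactly the units that induce the automorphism `ρ g` by conjugation, so it is zero
unless `ρ g` is inner. -/
def twistedCentralizer {𝕜 D G : Type*} [Field 𝕜] [DivisionRing D] [Algebra 𝕜 D] [Group G]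
    (ρ : G →* (D ≃ₐ[𝕜] D)) (g : G) : Submodule (Subring.center D) D where
  carrier := {d | ∀ y : D, ρ g y * d = d * y}
  add_mem' := fun ha hb y => by rw [mul_add, ha y, hb y, add_mul]
  zero_mem' := fun y => by rw [mul_zero, zero_mul]
  smul_mem' := fun z d hd y => by
    rw [mul_smul_comm, hd y, smul_mul_assoc]

section

variable {𝕜 D G : Type*} [Field 𝕜] [DivisionRing D] [Algebra 𝕜 D] [Group G]
  (ρ : G →* (D ≃ₐ[𝕜] D))

/-- Two elements inducing the same inner automorphism differ by a central factor, so the dimension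
is at most one. -/
instance twistedCentralizer_finite (g : G) :
    FiniteDimensional (Subring.center D) (twistedCentralizer ρ g) := by
  by_cases h : ∃ d ∈ twistedCentralizer ρ g, d ≠ 0
  · obtain ⟨d, hd, hd0⟩ := h
    have hle : twistedCentralizer ρ g ≤ Submodule.span (Subring.center D) {d} := by
      intro e he
      have hz : d⁻¹ * e ∈ Subring.center D := by
        rw [Subring.mem_center_iff]
        intro y
        apply mul_left_cancel₀ hd0
        rw [← mul_assoc, ← hd y, mul_assoc, mul_inv_cancel_left₀ hd0, he y, mul_assoc,
          mul_inv_cancel_left₀ hd0]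
      refine Submodule.mem_span_singleton.mpr ⟨⟨d⁻¹ * e, hz⟩, ?_⟩
      change d⁻¹ * e * d = e
      rw [← Subring.mem_center_iff.mp hz d, mul_inv_cancel_left₀ hd0]
    exact Submodule.finiteDimensional_of_le hle
  · push Not at h
    have : twistedCentralizer ρ g = ⊥ := (Submodule.eq_bot_iff _).mpr h
    rw [this]
    infer_instance

/-- The sum of all `twistedCentralizer ρ g`, which is closed under multiplication because the
product of elements inducing `g` and `h` induces `g * h`. -/
def twistedSubalgebra : Subalgebra (Subring.center D) D :=
  (⨆ g, twistedCentralizer ρ g).toSubalgebra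
    (Submodule.mem_iSup_of_mem 1 fun y => by simp)
    (by
      intro x y hx hy
      have hmul := Submodule.mul_mem_mul hx hy
      rw [Submodule.iSup_mul] at hmul
      simp only [Submodule.mul_iSup] at hmul
      refine SetLike.le_def.mp (iSup_le fun g => iSup_le fun h => ?_) hmul
      refine le_trans (Submodule.mul_le.mpr ?_) (le_iSup _ (g * h))
      intro a ha b hb z
      rw [map_mul, AlgEquiv.mul_apply, ← mul_assoc, ha, mul_assoc, hb, mul_assoc])

instance [Finite G] : FiniteDimensional (Subring.center D) (twistedSubalgebra ρ) :=
  inferInstanceAs (FiniteDimensional (Subring.center D)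
    ↥(⨆ g, twistedCentralizer ρ g : Submodule (Subring.center D) D))

/-- Elements inducing distinct automorphisms satisfy no linear relation involving `1`: on
`twistedSubalgebra ρ` the terms with `g ≠ 1` have trace zero, while `1` has nonzero trace. -/
theorem twistedCentralizer_sum_ne_zero [IsAlgClosed 𝕜] [CharZero 𝕜] [Fintype G]
    (hfaith : Function.Injective ρ) (b : G → D) (hb : ∀ g, b g ∈ twistedCentralizer ρ g)
    (hb1 : b 1 = 1) : ∑ g, b g ≠ 0 := by
  classical
  intro hsum
  let B := twistedSubalgebra ρ
  have hB : ∀ g, b g ∈ B := fun g =>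
    (le_iSup (twistedCentralizer ρ) g : _) (hb g)
  have htr : ∀ g, g ≠ 1 → LinearMap.trace (Subring.center D) B
      (Algebra.lmul (Subring.center D) B ⟨b g, hB g⟩) = 0 := by
    intro g hg
    -- An eigenvector `c` of `ρ g`, which is conjugation by `b g`, satisfies `c⁻¹ (b g) c = ζ (b g)`.
    have hcard : Nat.card G ≠ 0 := Nat.card_pos.ne'
    obtain ⟨ζ, hζ, c, hc, hgc⟩ := exists_eigenvector_ne_one (𝕜 := 𝕜) (ρ g).toLinearMap hcard
      (by
        ext x
        have h1 : (ρ g) ^ Nat.card G = 1 := by rw [← map_pow, pow_card_eq_one', map_one]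
        have h2 : ∀ n : ℕ, ((ρ g).toLinearMap ^ n) x = ((ρ g) ^ n) x := by
          intro n
          induction n with
          | zero => rfl
          | succ n ih => rw [pow_succ', pow_succ', Module.End.mul_apply, ih]; rfl
        rw [h2, h1]; rfl)
      (by
        intro h
        apply hg
        apply hfaith
        rw [map_one]
        exact AlgEquiv.ext fun x => LinearMap.congr_fun h x)
    have hgc' : ρ g c = ζ • c := hgc
    refine trace_eq_zero_of_conj B.val Subtype.val_injective _ c hc
      ⟨algebraMap 𝕜 D ζ, Subring.mem_center_iff.mpr fun x => (Algebra.commutes ζ x).symm⟩ ?_ ?_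
    · intro h
      apply hζ
      apply (algebraMap 𝕜 D).injective
      rw [map_one]
      exact congrArg Subtype.val h
    · change b g * c = algebraMap 𝕜 D ζ * (c * b g)
      rw [← hb g c, hgc', ← Algebra.smul_def, smul_mul_assoc]
  have hsum' : ∑ g, (⟨b g, hB g⟩ : B) = 0 := Subtype.ext (by simpa using hsum)
  have h := congrArg
    (fun x => LinearMap.trace (Subring.center D) B (Algebra.lmul (Subring.center D) B x)) hsum'
  simp only [map_sum, map_zero] at h
  rw [Finset.sum_eq_single 1 (fun g _ hg => htr g hg) (by simp)] at h
  have hone : (⟨b 1, hB 1⟩ : B) = 1 := Subtype.ext hb1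
  rw [hone, map_one, LinearMap.trace_one] at h
  have hD : CharZero D := charZero_of_injective_algebraMap (algebraMap 𝕜 D).injective
  have hZ : CharZero (Subring.center D) :=
    ⟨fun m n hmn => hD.cast_injective (by simpa using congrArg Subtype.val hmn)⟩
  have : Module.finrank (Subring.center D) B ≠ 0 := Module.finrank_pos.ne'
  exact this (by exact_mod_cast h)

/-- The automorphisms in a faithful finite group are linearly independent over `D`. In a relation of
minimal support, normalized to have coefficient `1` at `1`, every coefficient `b g` must induce
`ρ g` by conjugation, and evaluating at `1` contradicts `twistedCentralizer_sum_ne_zero`. -/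
theorem automorphisms_independent [IsAlgClosed 𝕜] [CharZero 𝕜] [Fintype G]
    (hfaith : Function.Injective ρ) (a : G → D) (ha : ∀ x, ∑ g, ρ g x * a g = 0) : a = 0 := by
  classical
  induction hn : (Finset.univ.filter fun g => a g ≠ 0).card using Nat.strong_induction_on
    generalizing a with
  | _ n ih =>
  subst hn
  by_contra hne
  obtain ⟨h, hh⟩ := Function.ne_iff.mp hne
  simp only [Pi.zero_apply] at hh
  let b : G → D := fun g => a (g * h) * (a h)⁻¹
  have hb1 : b 1 = 1 := by simp [b, hh]
  have hb : ∀ x, ∑ g, ρ g x * b g = 0 := by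
    intro x
    have h1 := ha (ρ h⁻¹ x)
    rw [← Equiv.sum_comp (Equiv.mulRight h)] at h1
    have h2 : ∀ g, ρ (g * h) (ρ h⁻¹ x) = ρ g x := by
      intro g
      rw [← AlgEquiv.mul_apply, ← map_mul, mul_inv_cancel_right]
    simp only [Equiv.coe_mulRight, h2] at h1
    simp only [b, ← mul_assoc, ← Finset.sum_mul, h1, zero_mul]
  have hcard : (Finset.univ.filter fun g => b g ≠ 0).card =
      (Finset.univ.filter fun g => a g ≠ 0).card := by
    refine Finset.card_bij (fun g _ => g * h) ?_ (by simp) ?_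
    · intro g hg; simpa [b, hh] using hg
    · intro g hg
      exact ⟨g * h⁻¹, by simpa [b, hh] using hg, by simp⟩
  have hmem : ∀ g, b g ∈ twistedCentralizer ρ g := by
    intro g y
    -- The relation at `x * y` minus the relation at `x` times `y` loses the term at `1`.
    have hz : (fun g => ρ g y * b g - b g * y) = 0 := by
      refine ih _ ?_ _ ?_ rfl
      · rw [← hcard]
        refine Finset.card_lt_card (Finset.ssubset_iff_subset_ne.mpr ⟨?_, ?_⟩)
        · intro g hg
          simp only [Finset.mem_filter_univ] at hg ⊢
          intro h0
          simp [h0] at hg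
        · intro heq
          have : (1 : G) ∈ Finset.univ.filter fun g => b g ≠ 0 := by simp [hb1]
          rw [← heq] at this
          simp [hb1] at this
      · intro x
        have h1 := hb (x * y)
        have h2 : (∑ g, ρ g x * b g) * y = 0 := by rw [hb x, zero_mul]
        rw [Finset.sum_mul] at h2
        simp only [map_mul] at h1
        simp only [mul_sub, Finset.sum_sub_distrib, ← mul_assoc, h1, h2, sub_self]
    exact sub_eq_zero.mp (congrFun hz g)
  exact twistedCentralizer_sum_ne_zero ρ hfaith b hmem hb1 (by simpa using hb 1)

end

/-! ### Galois descent for `Hom(V, D)` -/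

section

variable {𝕜 D G V : Type*} [Field 𝕜] [DivisionRing D] [Algebra 𝕜 D] [Group G]
  [AddCommGroup V] [Module 𝕜 V]
  (ρ : G →* (D ≃ₐ[𝕜] D)) (σ : Representation 𝕜 G V)

/-- The division ring structure on `D^G`, extending its existing ring structure. -/
noncomputable abbrev fixedDivisionRing : DivisionRing (fixedSubring ρ) :=
  DivisionRing.ofIsUnitOrEqZero fun a => by
    rw [or_iff_not_imp_right]
    intro ha
    have ha' : (a : D) ≠ 0 := fun h => ha (Subtype.ext h)
    refine isUnit_iff_exists.mpr
      ⟨⟨(a : D)⁻¹, fun g => by rw [map_inv₀, a.2 g]⟩, Subtype.ext ?_, Subtype.ext ?_⟩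
    · exact mul_inv_cancel₀ ha'
    · exact inv_mul_cancel₀ ha'

theorem homG_free : Module.Free (fixedSubring ρ) (homG ρ σ) :=
  @Module.Free.of_divisionRing (fixedSubring ρ) (homG ρ σ) (fixedDivisionRing ρ)
    (homG ρ σ).addCommGroup (homG ρ σ).module

theorem strongRankCondition_fixedSubring : StrongRankCondition (fixedSubring ρ) := by
  let _ := fixedDivisionRing ρ
  exact IsNoetherianRing.strongRankCondition (fixedSubring ρ)

/-- The semilinear action of `G` on `Hom(V, D)`, `(g w)(v) = g (w (g⁻¹ v))`, whose fixed points are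
`homG ρ σ`. -/
def conjAct (g : G) (w : V →ₗ[𝕜] D) : V →ₗ[𝕜] D :=
  (ρ g).toLinearMap ∘ₗ w ∘ₗ σ g⁻¹

theorem conjAct_apply (g : G) (w : V →ₗ[𝕜] D) (v : V) :
    conjAct ρ σ g w v = ρ g (w (σ g⁻¹ v)) := rfl

theorem traceMap_mem [Fintype G] (x : D) (w : V →ₗ[𝕜] D) :
    ∑ g, ρ g x • conjAct ρ σ g w ∈ homG ρ σ := by
  intro h v
  simp only [LinearMap.sum_apply, LinearMap.smul_apply, smul_eq_mul, map_sum, map_mul,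
    conjAct_apply]
  rw [← Equiv.sum_comp (Equiv.mulLeft h)]
  refine Finset.sum_congr rfl fun g _ => ?_
  have hv : σ (h * g)⁻¹ (σ h v) = σ g⁻¹ v := by
    rw [← Module.End.mul_apply, ← map_mul, mul_inv_rev, inv_mul_cancel_right]
  rw [Equiv.coe_mulLeft, hv]
  simp only [map_mul, AlgEquiv.mul_apply]

theorem trace_mem_fixedSubring [Fintype G] (x : D) : ∑ g, ρ g x ∈ fixedSubring ρ := by
  intro h
  rw [map_sum, ← Equiv.sum_comp (Equiv.mulLeft h) fun g => ρ g x]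
  refine Finset.sum_congr rfl fun g _ => ?_
  simp

/-- Independence over `Q = D^G` implies independence over `D`. From `∑ aᵢ fᵢ = 0`, summing the
translates of `y` times this relation gives the relation with coefficients `∑ g, g (y aᵢ) ∈ Q`,
which therefore vanish for all `y`. -/
theorem linearIndependent_of_homG [IsAlgClosed 𝕜] [CharZero 𝕜] [Fintype G]
    (hfaith : Function.Injective ρ) {ι : Type*} (f : ι → homG ρ σ)
    (hf : LinearIndependent (fixedSubring ρ) f) :
    LinearIndependent D fun i => (f i : V →ₗ[𝕜] D) := by
  replace hf := (linearIndependent_iff' (R := fixedSubring ρ) (M := homG ρ σ) (v := f)).mp hf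
  refine linearIndependent_iff'.mpr ?_
  intro s a hsum i hi
  have key : ∀ y : D, ∑ g, ρ g y * ρ g (a i) = 0 := by
    intro y
    have h0 := hf s (fun i => ⟨∑ g, ρ g (y * a i), trace_mem_fixedSubring ρ _⟩) (by
      apply Subtype.ext
      ext v
      have h1 : ∀ g, ∑ i ∈ s, ρ g (y * a i) * (f i : V →ₗ[𝕜] D) v = 0 := by
        intro g
        have h2 := congrArg (fun d => ρ g (y * d)) (LinearMap.congr_fun hsum (σ g⁻¹ v))
        simp only [LinearMap.sum_apply, LinearMap.smul_apply, smul_eq_mul, LinearMap.zero_apply,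
          mul_zero, map_zero, Finset.mul_sum, map_sum, ← mul_assoc] at h2
        rw [← h2]
        refine Finset.sum_congr rfl fun i _ => ?_
        rw [map_mul (ρ g) (y * a i), ← (f i).2 g, ← Module.End.mul_apply, ← map_mul,
          mul_inv_cancel, map_one, Module.End.one_apply]
      rw [Submodule.coe_sum, LinearMap.sum_apply]
      change ∑ i ∈ s, (∑ g, ρ g (y * a i)) * (f i : V →ₗ[𝕜] D) v = 0
      simp only [Finset.sum_mul]
      rw [Finset.sum_comm]
      exact Finset.sum_eq_zero fun g _ => h1 g) i hi
    simpa using congrArg Subtype.val h0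
  have h3 := congrFun (automorphisms_independent ρ hfaith (fun g => ρ g (a i)) key) 1
  simpa using h3

/-- A `D`-linear functional `φ` vanishing on `Hom_G(V, D)` kills all averages `∑ g, g(x) (g w)`, so
independence of the automorphisms gives `φ (g w) = 0` for all `g`. -/
theorem span_homG_eq_top [IsAlgClosed 𝕜] [CharZero 𝕜] [Fintype G]
    (hfaith : Function.Injective ρ) :
    Submodule.span D (homG ρ σ : Set (V →ₗ[𝕜] D)) = ⊤ := by
  by_contra hne
  obtain ⟨φ, hφ, hle⟩ := Submodule.exists_le_ker_of_lt_top _ (lt_top_iff_ne_top.mpr hne)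
  apply hφ
  ext w
  have key : ∀ x, ∑ g, ρ g x * φ (conjAct ρ σ g w) = 0 := by
    intro x
    have h := hle (Submodule.subset_span (traceMap_mem ρ σ x w))
    simpa using h
  have h := congrFun (automorphisms_independent ρ hfaith _ key) 1
  have h1 : conjAct ρ σ 1 w = w := by
    ext v; simp [conjAct_apply]
  simpa [h1] using h

theorem finrank_linearMap_left [FiniteDimensional 𝕜 V] :
    Module.finrank D (V →ₗ[𝕜] D) = Module.finrank 𝕜 V := by
  let b := Module.finBasis 𝕜 V
  rw [← (b.constr D : _ ≃ₗ[D] (V →ₗ[𝕜] D)).finrank_eq, Module.finrank_fin_fun]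

end

/-- If a finite group `G` acts faithfully on a division ring `D` containing the
algebraically closed field `𝕜` of characteristic zero by `𝕜`-algebra automorphisms,
and `V` is a finite-dimensional irreducible `𝕜`-linear representation of `G`, then
`dim_Q Hom_G(V, D) = dim_𝕜 V`, where `Q = D^G`. -/
theorem finrank_homG_eq_finrank
    (𝕜 : Type*) [Field 𝕜] [IsAlgClosed 𝕜] [CharZero 𝕜]
    (D : Type*) [DivisionRing D] [Algebra 𝕜 D]
    (G : Type*) [Group G] [Finite G]
    (ρ : G →* (D ≃ₐ[𝕜] D)) (hfaith : Function.Injective ρ)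
    (V : Type*) [AddCommGroup V] [Module 𝕜 V] [FiniteDimensional 𝕜 V] [Nontrivial V]
    (σ : Representation 𝕜 G V)
    (hirr : ∀ W : Submodule 𝕜 V, (∀ (g : G), ∀ v ∈ W, σ g v ∈ W) → W = ⊥ ∨ W = ⊤) :
    Module.finrank (fixedSubring ρ) (homG ρ σ) = Module.finrank 𝕜 V := by
  have := Fintype.ofFinite G
  have := homG_free ρ σ
  have := strongRankCondition_fixedSubring ρ
  let β := Module.Free.chooseBasis (fixedSubring ρ) (homG ρ σ)
  have hli := linearIndependent_of_homG ρ σ hfaith β β.linearIndependent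
  have hspan : ⊤ ≤ Submodule.span D (Set.range fun i => (β i : V →ₗ[𝕜] D)) := by
    rw [← span_homG_eq_top ρ σ hfaith, Submodule.span_le]
    intro f hf
    have h := congrArg Subtype.val (β.linearCombination_repr ⟨f, hf⟩)
    change _ = f at h
    rw [SetLike.mem_coe, ← h, Finsupp.linearCombination_apply, Finsupp.sum,
      Submodule.coe_sum]
    exact Submodule.sum_mem _ fun i _ =>
      Submodule.smul_mem _ ((β.repr ⟨f, hf⟩ i : fixedSubring ρ) : D)
        (Submodule.subset_span ⟨i, rfl⟩)
  rw [Module.finrank_eq_nat_card_basis β,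
    ← Module.finrank_eq_nat_card_basis (Module.Basis.mk hli hspan), finrank_linearMap_left]
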